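/- arXiv:1507.01712 — 5 statements merged into one kernel-verified Lean document; each statement's English description precedes it below -/
import Mathlib

section
/- For every integer n ≥ 1, all w₁, w₂ > 0 and every h ∈ ℝ, the function x ↦ u_{2n}(x,w₁) u_{2n}(h−x,w₂) is integrable on ℝ and ∫_ℝ u_{2n}(x,w₁) u_{2n}(h−x,w₂) dx = u_{2n}(h, w₁+w₂). -/
open MeasureTheory Set Real

/-- The even-order heat kernel `u_{2n}(x,w) = (1/(2π)) ∫_ℝ exp(−iξx − wξ^{2n}) dξ`. -/
noncomputable def u2n (n : ℕ) (x w : ℝ) : ℂ :=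
  ((2 * Real.pi)⁻¹ : ℝ) *
    ∫ ξ : ℝ, Complex.exp (-(Complex.I * ξ * x) - ((w * ξ ^ (2 * n) : ℝ) : ℂ))

/-!
Substituting `ξ ↦ -2πξ` shows that `u_{2n}(·, w)` is exactly the inverse Fourier transform of the
symbol `ξ ↦ exp(-w (2πξ)^{2n})`. Symbols multiply when the times `w` add, and the inverse Fourier
transform turns products of Schwartz functions into convolutions. That the symbol is a Schwartz
function is seen by writing it as the Gaussian `exp(-y² / 2)` composed with a monomial
`y = c ξ ^ n`.
-/

open scoped FourierTransform SchwartzMap Convolution Nat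

section Convolution

variable {𝕜 E F₁ F₂ F₃ : Type*} [NontriviallyNormedField 𝕜] [NormedAddCommGroup E]
  [MeasurableSpace E] [BorelSpace E]
  [NormedAddCommGroup F₁] [NormedAddCommGroup F₂] [NormedAddCommGroup F₃]

theorem schwartzMap_convolutionExists [NormedSpace ℝ E] [SecondCountableTopology E]
    [NormedSpace ℝ F₁] [NormedSpace ℝ F₂] [NormedSpace 𝕜 F₁] [NormedSpace 𝕜 F₂] [NormedSpace 𝕜 F₃]
    (B : F₁ →L[𝕜] F₂ →L[𝕜] F₃) (μ : Measure E) [μ.HasTemperateGrowth]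
    (f : 𝓢(E, F₁)) (g : 𝓢(E, F₂)) : ConvolutionExists f g B μ := by
  intro x
  have hfg_cont : Continuous fun t ↦ B (f t) (g (x - t)) := by fun_prop
  refine (f.integrable.norm.const_mul (‖B‖ * SchwartzMap.seminorm ℝ 0 0 g)).mono'
    hfg_cont.aestronglyMeasurable (.of_forall fun t ↦ ?_)
  calc ‖B (f t) (g (x - t))‖ ≤ ‖B‖ * ‖f t‖ * ‖g (x - t)‖ := B.le_opNorm₂ _ _
    _ ≤ ‖B‖ * ‖f t‖ * SchwartzMap.seminorm ℝ 0 0 g := by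
      gcongr
      exact g.norm_le_seminorm ℝ _
    _ = ‖B‖ * SchwartzMap.seminorm ℝ 0 0 g * ‖f t‖ := by ring

theorem convolution_fourierInv_apply [InnerProductSpace ℝ E] [FiniteDimensional ℝ E]
    [NormedSpace ℂ F₁] [NormedSpace ℂ F₂] [NormedSpace ℂ F₃]
    [CompleteSpace F₁] [CompleteSpace F₂] [CompleteSpace F₃]
    (B : F₁ →L[ℂ] F₂ →L[ℂ] F₃) (f : 𝓢(E, F₁)) (g : 𝓢(E, F₂)) (x : E) :
    ((𝓕⁻ f : 𝓢(E, F₁)) ⋆[B] (𝓕⁻ g : 𝓢(E, F₂))) x = 𝓕⁻ (SchwartzMap.pairing B f g) x := by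
  rw [← SchwartzMap.convolution_apply]
  simp [SchwartzMap.convolution]

end Convolution

section Gaussian

lemma abs_pow_mul_exp_neg_sq_div_two_le (k : ℕ) (x : ℝ) :
    |x| ^ k * exp (-(x ^ 2 / 2)) ≤ k ! * exp (1 / 2) := by
  have pow_le : |x| ^ k ≤ k ! * exp |x| := by
    rw [← div_le_iff₀' (by positivity)]
    exact pow_div_factorial_le_exp |x| (abs_nonneg x) k
  calc |x| ^ k * exp (-(x ^ 2 / 2)) ≤ k ! * exp |x| * exp (-(x ^ 2 / 2)) := by gcongr
    _ = k ! * exp (|x| - x ^ 2 / 2) := by rw [mul_assoc, ← exp_add, sub_eq_add_neg]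
    _ ≤ k ! * exp (1 / 2) := by
      gcongr
      nlinarith [sq_nonneg (|x| - 1), sq_abs x]

open Polynomial in
lemma exists_abs_eval_mul_exp_neg_sq_div_two_le (p : ℝ[X]) :
    ∃ C, ∀ x : ℝ, |p.eval x| * exp (-(x ^ 2 / 2)) ≤ C := by
  induction p using Polynomial.induction_on' with
  | add p q hp hq =>
    obtain ⟨C, hC⟩ := hp
    obtain ⟨D, hD⟩ := hq
    refine ⟨C + D, fun x ↦ ?_⟩
    calc |(p + q).eval x| * exp (-(x ^ 2 / 2))
        ≤ (|p.eval x| + |q.eval x|) * exp (-(x ^ 2 / 2)) := by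
          rw [eval_add]
          gcongr
          exact abs_add_le _ _
      _ ≤ C + D := by
          rw [add_mul]
          exact add_le_add (hC x) (hD x)
  | monomial k a =>
    refine ⟨|a| * (k ! * exp (1 / 2)), fun x ↦ ?_⟩
    rw [eval_monomial, abs_mul, abs_pow, mul_assoc]
    exact mul_le_mul_of_nonneg_left (abs_pow_mul_exp_neg_sq_div_two_le k x) (abs_nonneg a)

/-- The Gaussian `x ↦ exp (-x² / 2)` as a Schwartz function. The normalization is the one for which
the derivatives are given by `Polynomial.hermite`. -/
noncomputable def gaussianSchwartz : 𝓢(ℝ, ℝ) where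
  toFun x := exp (-(x ^ 2 / 2))
  smooth' := by fun_prop
  decay' k m := by
    obtain ⟨C, hC⟩ := exists_abs_eval_mul_exp_neg_sq_div_two_le
      (.X ^ k * (Polynomial.hermite m).map (Int.castRingHom ℝ))
    refine ⟨C, fun x ↦ le_of_eq_of_le ?_ (hC x)⟩
    rw [norm_iteratedFDeriv_eq_norm_iteratedDeriv, iteratedDeriv_eq_iterate,
      Polynomial.deriv_gaussian_eq_hermite_mul_gaussian]
    simp [abs_mul, Polynomial.aeval_def, Polynomial.eval_map, mul_assoc]

end Gaussian

section HeatSymbol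

lemma norm_le_mul_one_add_norm_const_mul_pow {𝕜 : Type*} [NormedField 𝕜] {c : 𝕜} (hc : c ≠ 0)
    {n : ℕ} (hn : n ≠ 0) (x : 𝕜) : ‖x‖ ≤ (1 + ‖c‖⁻¹) * (1 + ‖c * x ^ n‖) := by
  have norm_le : ‖x‖ ≤ 1 + ‖x‖ ^ n := by
    rcases le_total ‖x‖ 1 with hx | hx
    · exact hx.trans (le_add_of_nonneg_right (by positivity))
    · exact (le_self_pow₀ hx hn).trans (le_add_of_nonneg_left zero_le_one)
  have pow_eq : ‖x‖ ^ n = ‖c‖⁻¹ * ‖c * x ^ n‖ := by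
    rw [norm_mul, norm_pow, inv_mul_cancel_left₀ (norm_ne_zero_iff.mpr hc)]
  rw [pow_eq] at norm_le
  have : 0 ≤ ‖c‖⁻¹ := by positivity
  linarith [norm_nonneg (c * x ^ n)]

/-- The composition of a Schwartz function on `ℝ` with the monomial `x ↦ c * x ^ n`. -/
noncomputable def compMonomial {F : Type*} [NormedAddCommGroup F] [NormedSpace ℝ F]
    {c : ℝ} (hc : c ≠ 0) {n : ℕ} (hn : n ≠ 0) (f : 𝓢(ℝ, F)) : 𝓢(ℝ, F) :=
  f.compCLM ℝ (g := fun x ↦ c * x ^ n) (by fun_prop)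
    ⟨1, 1 + ‖c‖⁻¹, by simpa only [pow_one] using norm_le_mul_one_add_norm_const_mul_pow hc hn⟩

variable {n : ℕ} {w : ℝ}

/-- The Fourier symbol `ξ ↦ exp (-w (2πξ)^{2n})` of the heat kernel `u2n n · w`, in the convention
`𝓕⁻ f x = ∫ exp (2πiξx) f ξ dξ`. -/
noncomputable def heatSymbol (hn : n ≠ 0) (hw : 0 < w) : 𝓢(ℝ, ℂ) :=
  (compMonomial (c := √(2 * w) * (2 * π) ^ n) (by positivity) hn gaussianSchwartz).postcompCLM
    Complex.ofRealCLM

lemma heatSymbol_apply (hn : n ≠ 0) (hw : 0 < w) (ξ : ℝ) :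
    heatSymbol hn hw ξ = (exp (-(w * (2 * π * ξ) ^ (2 * n))) : ℝ) := by
  change ((exp (-((√(2 * w) * (2 * π) ^ n * ξ ^ n) ^ 2 / 2)) : ℝ) : ℂ) = _
  have sq_sqrt_eq : √(2 * w) ^ 2 = 2 * w := sq_sqrt (by positivity)
  congr 3
  rw [mul_assoc, ← mul_pow, mul_pow, sq_sqrt_eq, ← pow_mul', mul_assoc,
    mul_div_cancel_left₀ _ two_ne_zero]

lemma pairing_mul_heatSymbol (hn : n ≠ 0) {w₁ w₂ : ℝ} (hw₁ : 0 < w₁) (hw₂ : 0 < w₂) :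
    SchwartzMap.pairing (.mul ℂ ℂ) (heatSymbol hn hw₁) (heatSymbol hn hw₂) =
      heatSymbol hn (add_pos hw₁ hw₂) := by
  ext ξ
  rw [SchwartzMap.pairing_apply_apply, ContinuousLinearMap.mul_apply']
  simp only [heatSymbol_apply]
  rw [← Complex.ofReal_mul, ← exp_add, add_mul, neg_add]

theorem u2n_eq_fourierInv_heatSymbol (hn : n ≠ 0) (hw : 0 < w) (x : ℝ) :
    u2n n x w = 𝓕⁻ (heatSymbol hn hw) x := by
  let kernel (ξ : ℝ) : ℂ := Complex.exp (-(Complex.I * ξ * x) - ((w * ξ ^ (2 * n) : ℝ) : ℂ))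
  have kernel_dilated (ξ : ℝ) : kernel (-(2 * π) * ξ) =
      Complex.exp (↑(2 * π * inner ℝ ξ x) * Complex.I) • heatSymbol hn hw ξ := by
    rw [heatSymbol_apply, Complex.ofReal_exp, smul_eq_mul, ← Complex.exp_add]
    simp only [kernel, neg_mul, (even_two_mul n).neg_pow, RCLike.inner_apply, conj_trivial]
    congr 1
    push_cast
    ring
  calc u2n n x w = |(-(2 * π))⁻¹| • ∫ ξ, kernel ξ := by
        rw [inv_neg, abs_neg, abs_of_pos (by positivity), Complex.real_smul]
        rfl
    _ = ∫ ξ, kernel (-(2 * π) * ξ) := (Measure.integral_comp_mul_left kernel _).symm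
    _ = 𝓕⁻ (heatSymbol hn hw) x := by
        rw [SchwartzMap.fourierInv_coe, fourierInv_eq']
        simp only [kernel_dilated]

end HeatSymbol

/-- Chapman–Kolmogorov (semigroup) property of the even-order heat kernels:
`∫_ℝ u_{2n}(x,w₁) u_{2n}(h−x,w₂) dx = u_{2n}(h, w₁+w₂)`. -/
theorem stmt2 (n : ℕ) (hn : 1 ≤ n) (w₁ w₂ : ℝ) (hw₁ : 0 < w₁) (hw₂ : 0 < w₂) (h : ℝ) :
    Integrable (fun x : ℝ => u2n n x w₁ * u2n n (h - x) w₂) ∧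
    ∫ x : ℝ, u2n n x w₁ * u2n n (h - x) w₂ = u2n n h (w₁ + w₂) := by
  have hn₀ : n ≠ 0 := Nat.one_le_iff_ne_zero.mp hn
  simp only [u2n_eq_fourierInv_heatSymbol hn₀ hw₁, u2n_eq_fourierInv_heatSymbol hn₀ hw₂,
    u2n_eq_fourierInv_heatSymbol hn₀ (add_pos hw₁ hw₂), ← pairing_mul_heatSymbol hn₀ hw₁ hw₂]
  exact ⟨schwartzMap_convolutionExists (.mul ℂ ℂ) volume _ _ h,
    convolution_fourierInv_apply (.mul ℂ ℂ) _ _ h⟩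
end

section
/- Let μ > 0, β > 0, σ > 0. For every τ ∈ ℝ, the function h ↦ e^{iτh} (σ²/Γ(2β)) ∫₀^∞ w^{2β−1} e^{−μw} G(h,w) dw is integrable on ℝ and ∫_ℝ e^{iτh} [(σ²/Γ(2β)) ∫₀^∞ w^{2β−1} e^{−μw} G(h,w) dw] dh = σ²/(μ + τ²)^{2β}. (This is the spectral function of the solution to (μ − d²/dt²)^β X(t) = E(t), where E is Gaussian white noise of intensity σ².) -/
open MeasureTheory Set Real

/-- The Gaussian heat kernel `G(x,w) = exp(−x²/(4w))/(2√(πw))`. -/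
noncomputable def G (x w : ℝ) : ℝ :=
  Real.exp (-x ^ 2 / (4 * w)) / (2 * Real.sqrt (Real.pi * w))

/-!
For `w > 0`, `G(·, w)` is the centred Gaussian density of variance `2w`, whose characteristic
function is `τ ↦ exp(-τ²w)`. By Fubini, the Fourier transform of the mixture `∫ f(w) G(·, w) dν(w)`
is therefore the Laplace transform of `f dν` at `τ²`. For the Gamma weight `w^(a-1) e^(-μw)` this
Laplace transform is `Γ(a) / (μ + τ²)^a`; the theorem is the case `a = 2β`.
-/

open ProbabilityTheory
open scoped NNReal

theorem G_eq_gaussianPDFReal (x : ℝ) (w : ℝ≥0) : G x w = gaussianPDFReal 0 (2 * w) x := by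
  have sqrt_eq : √(2 * π * (2 * w)) = 2 * √(π * w) := by
    rw [show 2 * π * (2 * w) = 2 ^ 2 * (π * w) by ring, sqrt_mul (by positivity),
      sqrt_sq zero_le_two]
  simp only [G, gaussianPDFReal, NNReal.coe_mul, NNReal.coe_ofNat, sub_zero, sqrt_eq]
  ring_nf

theorem G_nonneg (x w : ℝ) : 0 ≤ G x w := by
  unfold G
  positivity

@[fun_prop]
theorem measurable_uncurry_G : Measurable fun p : ℝ × ℝ => G p.1 p.2 := by
  unfold G
  fun_prop

theorem integrable_G {w : ℝ} (hw : 0 ≤ w) : Integrable fun x => G x w := by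
  lift w to ℝ≥0 using hw
  simpa only [G_eq_gaussianPDFReal] using integrable_gaussianPDFReal 0 (2 * w)

theorem integral_G {w : ℝ} (hw : 0 < w) : ∫ x, G x w = 1 := by
  lift w to ℝ≥0 using hw.le
  simp only [G_eq_gaussianPDFReal]
  exact integral_gaussianPDFReal_eq_one 0 (mul_ne_zero two_ne_zero (NNReal.coe_pos.mp hw).ne')

theorem integral_cexp_mul_G {w : ℝ} (hw : 0 < w) (τ : ℝ) :
    ∫ x : ℝ, Complex.exp (Complex.I * τ * x) * G x w = rexp (-τ ^ 2 * w) := by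
  lift w to ℝ≥0 using hw.le
  have variance_ne_zero : 2 * w ≠ 0 := mul_ne_zero two_ne_zero (NNReal.coe_pos.mp hw).ne'
  calc ∫ x : ℝ, Complex.exp (Complex.I * τ * x) * G x w
      = charFun (gaussianReal 0 (2 * w)) τ := by
        rw [charFun_apply_real, integral_gaussianReal_eq_integral_smul variance_ne_zero]
        refine integral_congr_ae (.of_forall fun x => ?_)
        simp only [G_eq_gaussianPDFReal, Complex.real_smul]
        ring_nf
    _ = rexp (-τ ^ 2 * w) := by
        rw [charFun_gaussianReal]
        push_cast
        ring_nf

theorem integrable_cexp_I_mul_mul {α : Type*} {m : MeasurableSpace α} {ρ : Measure α}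
    {φ : α → ℝ} {g : α → ℂ} (hφ : Measurable φ) (hg : Integrable g ρ) (τ : ℝ) :
    Integrable (fun x => Complex.exp (Complex.I * τ * φ x) * g x) ρ := by
  refine hg.bdd_mul (c := 1) (by fun_prop) (.of_forall fun x => ?_)
  rw [mul_assoc, ← Complex.ofReal_mul, Complex.norm_exp_I_mul_ofReal]

section HeatKernelMixture

variable {ν : Measure ℝ} [SFinite ν] {f : ℝ → ℂ}

theorem integrable_prod_mul_G (hν : ∀ᵐ w ∂ν, 0 < w) (hf : Integrable f ν) :
    Integrable (fun p : ℝ × ℝ => f p.2 * G p.1 p.2) (volume.prod ν) := by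
  have aesm : AEStronglyMeasurable (fun p : ℝ × ℝ => f p.2 * G p.1 p.2) (volume.prod ν) :=
    hf.aestronglyMeasurable.comp_snd.mul (by fun_prop)
  refine (integrable_prod_iff' aesm).mpr ⟨?_, hf.norm.congr ?_⟩
  · filter_upwards [hν] with w hw
    exact (integrable_G hw.le).ofReal.const_mul _
  · filter_upwards [hν] with w hw
    simp only [norm_mul, Complex.norm_real, norm_of_nonneg (G_nonneg _ _), integral_const_mul,
      integral_G hw, mul_one]

theorem integrable_integral_mul_G (hν : ∀ᵐ w ∂ν, 0 < w) (hf : Integrable f ν) :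
    Integrable fun x : ℝ => ∫ w, f w * G x w ∂ν :=
  (integrable_prod_mul_G hν hf).integral_prod_left

theorem integral_cexp_mul_integral_mul_G (hν : ∀ᵐ w ∂ν, 0 < w) (hf : Integrable f ν) (τ : ℝ) :
    ∫ x : ℝ, Complex.exp (Complex.I * τ * x) * ∫ w, f w * G x w ∂ν =
      ∫ w, f w * rexp (-τ ^ 2 * w) ∂ν := by
  have integrable_prod : Integrable
      (fun p : ℝ × ℝ => Complex.exp (Complex.I * τ * p.1) * (f p.2 * G p.1 p.2))
      (volume.prod ν) :=
    integrable_cexp_I_mul_mul measurable_fst (integrable_prod_mul_G hν hf) τ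
  calc ∫ x : ℝ, Complex.exp (Complex.I * τ * x) * ∫ w, f w * G x w ∂ν
      = ∫ x : ℝ, ∫ w, Complex.exp (Complex.I * τ * x) * (f w * G x w) ∂ν := by
        simp only [integral_const_mul]
    _ = ∫ w, (∫ x : ℝ, Complex.exp (Complex.I * τ * x) * (f w * G x w)) ∂ν :=
        integral_integral_swap integrable_prod
    _ = ∫ w, f w * rexp (-τ ^ 2 * w) ∂ν := by
        refine integral_congr_ae ?_
        filter_upwards [hν] with w hw
        simp only [mul_left_comm _ (f w), integral_const_mul, integral_cexp_mul_G hw]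

end HeatKernelMixture

section GammaWeight

variable {a μ : ℝ}

theorem integrableOn_rpow_mul_exp_neg_mul_Ioi (ha : 0 < a) (hμ : 0 < μ) :
    IntegrableOn (fun w : ℝ => w ^ (a - 1) * rexp (-μ * w)) (Ioi 0) := by
  simpa only [rpow_one] using
    integrableOn_rpow_mul_exp_neg_mul_rpow (p := 1) (by linarith : -1 < a - 1) one_pos hμ

theorem ofReal_setIntegral_gammaWeight_mul_G (a μ x : ℝ) :
    ((∫ w in Ioi (0 : ℝ), w ^ (a - 1) * rexp (-μ * w) * G x w : ℝ) : ℂ) =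
      ∫ w in Ioi (0 : ℝ), ((w ^ (a - 1) * rexp (-μ * w) : ℝ) : ℂ) * G x w := by
  simp only [← integral_complex_ofReal, Complex.ofReal_mul]

theorem integrable_setIntegral_gammaWeight_mul_G (ha : 0 < a) (hμ : 0 < μ) :
    Integrable fun x : ℝ =>
      ((∫ w in Ioi (0 : ℝ), w ^ (a - 1) * rexp (-μ * w) * G x w : ℝ) : ℂ) := by
  simp only [ofReal_setIntegral_gammaWeight_mul_G]
  exact integrable_integral_mul_G (ae_restrict_mem measurableSet_Ioi)
    (integrableOn_rpow_mul_exp_neg_mul_Ioi ha hμ).ofReal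

theorem integral_cexp_mul_setIntegral_gammaWeight_mul_G (ha : 0 < a) (hμ : 0 < μ) (τ : ℝ) :
    ∫ x : ℝ, Complex.exp (Complex.I * τ * x) *
        ((∫ w in Ioi (0 : ℝ), w ^ (a - 1) * rexp (-μ * w) * G x w : ℝ) : ℂ) =
      ((Gamma a / (μ + τ ^ 2) ^ a : ℝ) : ℂ) := by
  have rate_pos : 0 < μ + τ ^ 2 := by positivity
  have exp_mul_exp (w : ℝ) :
      w ^ (a - 1) * rexp (-μ * w) * rexp (-τ ^ 2 * w) =
        w ^ (a - 1) * rexp (-((μ + τ ^ 2) * w)) := by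
    rw [mul_assoc, ← exp_add]
    ring_nf
  simp only [ofReal_setIntegral_gammaWeight_mul_G]
  calc ∫ x : ℝ, Complex.exp (Complex.I * τ * x) *
        ∫ w in Ioi (0 : ℝ), ((w ^ (a - 1) * rexp (-μ * w) : ℝ) : ℂ) * G x w
      = ∫ w in Ioi (0 : ℝ), ((w ^ (a - 1) * rexp (-μ * w) : ℝ) : ℂ) * rexp (-τ ^ 2 * w) :=
        integral_cexp_mul_integral_mul_G (ν := volume.restrict (Ioi 0))
          (ae_restrict_mem measurableSet_Ioi) (integrableOn_rpow_mul_exp_neg_mul_Ioi ha hμ).ofReal τ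
    _ = ((∫ w in Ioi (0 : ℝ), w ^ (a - 1) * rexp (-((μ + τ ^ 2) * w)) : ℝ) : ℂ) := by
        simp only [← Complex.ofReal_mul, exp_mul_exp, integral_complex_ofReal]
    _ = ((Gamma a / (μ + τ ^ 2) ^ a : ℝ) : ℂ) := by
        rw [integral_rpow_mul_exp_neg_mul_Ioi ha rate_pos, one_div, inv_rpow rate_pos.le,
          inv_mul_eq_div]

end GammaWeight

/-- The spectral function of the solution to `(μ − d²/dt²)^β X(t) = E(t)` is
`σ²/(μ + τ²)^{2β}`. -/
theorem stmt6 (μ β σ : ℝ) (hμ : 0 < μ) (hβ : 0 < β) (hσ : 0 < σ) (τ : ℝ) :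
    Integrable (fun h : ℝ =>
      Complex.exp (Complex.I * τ * h) *
        (((σ ^ 2 / Real.Gamma (2 * β) : ℝ) : ℂ) *
          ((∫ w in Set.Ioi (0 : ℝ), w ^ (2 * β - 1) * Real.exp (-μ * w) * G h w : ℝ) : ℂ))) ∧
    ∫ h : ℝ,
        Complex.exp (Complex.I * τ * h) *
          (((σ ^ 2 / Real.Gamma (2 * β) : ℝ) : ℂ) *
            ((∫ w in Set.Ioi (0 : ℝ), w ^ (2 * β - 1) * Real.exp (-μ * w) * G h w : ℝ) : ℂ)) =
      ((σ ^ 2 / (μ + τ ^ 2) ^ (2 * β) : ℝ) : ℂ) := by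
  have two_β_pos : 0 < 2 * β := by positivity
  constructor
  · exact integrable_cexp_I_mul_mul measurable_id
      ((integrable_setIntegral_gammaWeight_mul_G two_β_pos hμ).const_mul _) τ
  · simp only [mul_left_comm (Complex.exp _)]
    rw [integral_const_mul, integral_cexp_mul_setIntegral_gammaWeight_mul_G two_β_pos hμ,
      ← Complex.ofReal_mul, div_mul_div_cancel₀ (Gamma_pos_of_pos two_β_pos).ne']
end

section
/- For every μ > 0 and β > 0, lim_{h → ∞} [∫₀^∞ z^{β−3/2} e^{−μ²z − h²/(4z)} dz] / [√π · 2^{1−β} · μ^{−β} · h^{β−1} e^{−μh}] = 1. -/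
open MeasureTheory Set Real Filter

open Asymptotics Topology

/-!
The substitution `z = (h / (2μ)) eᵗ` symmetrizes the exponent to `-μh cosh t` and identifies the
integral with `2 (h / (2μ)) ^ (β - 1/2) * K_{β - 1/2}(μh)`. The asymptotics of the Bessel function
come from Laplace's method: rescaling `t = s / √x` in `K_ν(x) = ½ ∫ exp (νt - x cosh t) dt` pulls
out `exp (-x) / (2√x)` and leaves an integral whose integrand tends to the Gaussian
`exp (-s² / 2)` and is dominated, for `x ≥ 1`, by a fixed Gaussian because `cosh t - 1 ≥ t² / 2`.
-/

lemma cosh_sub_one_eq_two_mul_sinh_half_sq (t : ℝ) : cosh t - 1 = 2 * sinh (t / 2) ^ 2 := by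
  have h := cosh_two_mul (t / 2)
  rw [mul_div_cancel₀ t two_ne_zero, cosh_sq] at h
  linarith

lemma sq_div_two_le_cosh_sub_one (t : ℝ) : t ^ 2 / 2 ≤ cosh t - 1 := by
  have half_sq_le : (t / 2) ^ 2 ≤ sinh (t / 2) ^ 2 := by
    rw [sq_le_sq, abs_sinh]
    exact self_le_sinh_iff.2 (abs_nonneg _)
  rw [cosh_sub_one_eq_two_mul_sinh_half_sq]
  linarith

lemma tendsto_mul_cosh_div_sqrt_sub_one (s : ℝ) :
    Tendsto (fun x : ℝ => x * (cosh (s / √x) - 1)) atTop (𝓝 (s ^ 2 / 2)) := by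
  have inv_sqrt_tendsto : Tendsto (fun x : ℝ => (√x)⁻¹) atTop (𝓝[≠] 0) :=
    (tendsto_inv_atTop_nhdsGT_zero.comp tendsto_sqrt_atTop).mono_right (nhdsGT_le_nhdsNE 0)
  have hasDerivAt_sinh_mul : HasDerivAt (fun b : ℝ => sinh (b * (s / 2))) (s / 2) 0 := by
    simpa using ((hasDerivAt_id (0 : ℝ)).mul_const (s / 2)).sinh
  have slope_sq_tendsto :=
    ((hasDerivAt_sinh_mul.tendsto_slope_zero.comp inv_sqrt_tendsto).pow 2).const_mul 2
  rw [show 2 * (s / 2) ^ 2 = s ^ 2 / 2 by ring] at slope_sq_tendsto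
  refine slope_sq_tendsto.congr' ?_
  filter_upwards [eventually_ge_atTop 0] with x hx
  have half_arg : (√x)⁻¹ * (s / 2) = s / √x / 2 := by ring
  simp only [Function.comp_apply, zero_add, zero_mul, sinh_zero, sub_zero, inv_inv, smul_eq_mul,
    half_arg, cosh_sub_one_eq_two_mul_sinh_half_sq, mul_pow, sq_sqrt hx]
  ring

/-- The modified Bessel function of the second kind `K_ν(x)` of real order, through the integral
representation `K_ν(x) = ½ ∫ exp (νt - x cosh t) dt` over the real line. The integral converges
for `x > 0`; for `x ≤ 0` the value is the junk value `0`. -/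
noncomputable def besselK (ν x : ℝ) : ℝ := (∫ t : ℝ, exp (ν * t - x * cosh t)) / 2

lemma besselK_eq_mul_integral_rescaled (ν : ℝ) {x : ℝ} (hx : 0 < x) :
    besselK ν x =
      exp (-x) / (2 * √x) * ∫ s : ℝ, exp (ν * (s / √x) - x * (cosh (s / √x) - 1)) := by
  have sqrt_pos : 0 < √x := sqrt_pos.2 hx
  have factor_exp (t : ℝ) :
      exp (ν * t - x * (cosh t - 1)) = exp x * exp (ν * t - x * cosh t) := by
    rw [← exp_add]
    ring_nf
  rw [Measure.integral_comp_div (fun t => exp (ν * t - x * (cosh t - 1))) √x,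
    abs_of_pos sqrt_pos, smul_eq_mul]
  simp only [factor_exp, integral_const_mul, besselK, exp_neg]
  field_simp

lemma exp_rescaled_le_gaussian (ν s : ℝ) {x : ℝ} (hx : 1 ≤ x) :
    exp (ν * (s / √x) - x * (cosh (s / √x) - 1)) ≤ exp (ν ^ 2) * exp (-(1 / 4) * s ^ 2) := by
  have x_mul_sq : x * (s / √x) ^ 2 = s ^ 2 := by
    rw [div_pow, sq_sqrt (by linarith)]
    field_simp
  rw [← exp_add, exp_le_exp]
  generalize s / √x = t at x_mul_sq ⊢
  have cosh_term : s ^ 2 / 2 ≤ x * (cosh t - 1) :=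
    calc s ^ 2 / 2 = x * (t ^ 2 / 2) := by rw [← x_mul_sq]; ring
      _ ≤ x * (cosh t - 1) := by gcongr; exact sq_div_two_le_cosh_sub_one t
  have linear_term : ν * t ≤ ν ^ 2 + s ^ 2 / 4 :=
    calc ν * t ≤ ν ^ 2 + t ^ 2 / 4 := by linarith [sq_nonneg (ν - t / 2)]
      _ ≤ ν ^ 2 + x * t ^ 2 / 4 := by gcongr; exact le_mul_of_one_le_left (sq_nonneg t) hx
      _ = ν ^ 2 + s ^ 2 / 4 := by rw [x_mul_sq]
  linarith

lemma tendsto_exp_rescaled_gaussian (ν s : ℝ) :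
    Tendsto (fun x : ℝ => exp (ν * (s / √x) - x * (cosh (s / √x) - 1))) atTop
      (𝓝 (exp (-(1 / 2) * s ^ 2))) := by
  have linear_term : Tendsto (fun x : ℝ => ν * (s / √x)) atTop (𝓝 0) := by
    simpa using (tendsto_sqrt_atTop.const_div_atTop s).const_mul ν
  have exponent := linear_term.sub (tendsto_mul_cosh_div_sqrt_sub_one s)
  rw [show 0 - s ^ 2 / 2 = -(1 / 2) * s ^ 2 by ring] at exponent
  exact exponent.rexp

lemma tendsto_integral_exp_rescaled (ν : ℝ) :
    Tendsto (fun x : ℝ => ∫ s : ℝ, exp (ν * (s / √x) - x * (cosh (s / √x) - 1))) atTop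
      (𝓝 √(2 * π)) := by
  have gaussian : ∫ s : ℝ, exp (-(1 / 2) * s ^ 2) = √(2 * π) := by
    rw [integral_gaussian, div_div_eq_mul_div, div_one, mul_comm]
  rw [← gaussian]
  refine tendsto_integral_filter_of_dominated_convergence
    (fun s => exp (ν ^ 2) * exp (-(1 / 4) * s ^ 2)) ?_ ?_ ?_ ?_
  · exact Eventually.of_forall fun x => Continuous.aestronglyMeasurable (by fun_prop)
  · filter_upwards [eventually_ge_atTop 1] with x hx
    refine ae_of_all _ fun s => ?_
    rw [norm_of_nonneg (exp_pos _).le]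
    exact exp_rescaled_le_gaussian ν s hx
  · exact (integrable_exp_neg_mul_sq (by norm_num)).const_mul _
  · exact ae_of_all _ (tendsto_exp_rescaled_gaussian ν)

theorem besselK_isEquivalent_atTop (ν : ℝ) :
    besselK ν ~[atTop] fun x => √(π / (2 * x)) * exp (-x) := by
  have integral_isEquivalent :=
    (isEquivalent_const_iff_tendsto (by positivity)).2 (tendsto_integral_exp_rescaled ν)
  have prefactor_isEquivalent :
      (fun x : ℝ => exp (-x) / (2 * √x)) ~[atTop] fun x => exp (-x) / (2 * √x) := .refl
  refine ((prefactor_isEquivalent.mul integral_isEquivalent).congr_left ?_).congr_right ?_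
  · filter_upwards [eventually_gt_atTop 0] with x hx
    exact (besselK_eq_mul_integral_rescaled ν hx).symm
  · filter_upwards [eventually_gt_atTop 0] with x hx
    have sqrt_ratio : √(2 * π) / (2 * √x) = √(π / (2 * x)) := by
      rw [sqrt_div pi_pos.le, sqrt_mul zero_le_two, sqrt_mul zero_le_two]
      field_simp
      rw [sq_sqrt zero_le_two]
    simp only [Pi.mul_apply, Function.const_apply, ← sqrt_ratio]
    ring

lemma integral_exp_smul_comp_exp {E : Type*} [NormedAddCommGroup E] [NormedSpace ℝ E]
    (g : ℝ → E) : ∫ t : ℝ, exp t • g (exp t) = ∫ z in Ioi (0 : ℝ), g z := by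
  have change_of_variables := integral_image_eq_integral_abs_deriv_smul MeasurableSet.univ
    (fun t _ => (hasDerivAt_exp t).hasDerivWithinAt) exp_injective.injOn g
  simpa only [image_univ, range_exp, setIntegral_univ, abs_exp] using change_of_variables.symm

theorem integral_rpow_mul_exp_add_inv_eq_besselK (ν x : ℝ) :
    ∫ z in Ioi (0 : ℝ), z ^ (ν - 1) * exp (-(x / 2) * (z + z⁻¹)) = 2 * besselK ν x := by
  rw [← integral_exp_smul_comp_exp, besselK, mul_div_cancel₀ _ two_ne_zero]
  congr with t
  rw [smul_eq_mul, ← exp_mul, ← exp_neg, ← exp_add, ← exp_add, cosh_eq]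
  ring_nf

theorem integral_rpow_mul_exp_div_add_div_eq_besselK (ν x : ℝ) {a : ℝ} (ha : 0 < a) :
    ∫ z in Ioi (0 : ℝ), z ^ (ν - 1) * exp (-(x / 2) * (z / a + a / z)) =
      2 * a ^ ν * besselK ν x := by
  have scale := integral_comp_mul_left_Ioi
    (fun z => z ^ (ν - 1) * exp (-(x / 2) * (z / a + a / z))) 0 ha
  rw [mul_zero, smul_eq_mul, eq_inv_mul_iff_mul_eq₀ ha.ne'] at scale
  have rescaled_integrand : ∀ u ∈ Ioi (0 : ℝ),
      (a * u) ^ (ν - 1) * exp (-(x / 2) * (a * u / a + a / (a * u))) =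
        a ^ (ν - 1) * (u ^ (ν - 1) * exp (-(x / 2) * (u + u⁻¹))) := by
    intro u hu
    rw [mul_rpow ha.le (mem_Ioi.1 hu).le, mul_div_cancel_left₀ u ha.ne',
      div_mul_cancel_left₀ ha.ne', mul_assoc]
  rw [← scale, setIntegral_congr_fun measurableSet_Ioi rescaled_integrand, integral_const_mul,
    integral_rpow_mul_exp_add_inv_eq_besselK, rpow_sub_one ha.ne']
  field_simp

theorem integral_rpow_mul_exp_sub_eq_besselK (ν : ℝ) {μ h : ℝ} (hμ : 0 < μ) (hh : 0 < h) :
    ∫ z in Ioi (0 : ℝ), z ^ (ν - 1) * exp (-μ ^ 2 * z - h ^ 2 / (4 * z)) =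
      2 * (h / (2 * μ)) ^ ν * besselK ν (μ * h) := by
  rw [← integral_rpow_mul_exp_div_add_div_eq_besselK ν (μ * h) (by positivity : 0 < h / (2 * μ))]
  refine setIntegral_congr_fun measurableSet_Ioi fun z hz => ?_
  have hz : z ≠ 0 := (mem_Ioi.1 hz).ne'
  have exponent : -μ ^ 2 * z - h ^ 2 / (4 * z) =
      -(μ * h / 2) * (z / (h / (2 * μ)) + h / (2 * μ) / z) := by
    field_simp
    ring
  simp only [exponent]

lemma two_mul_rpow_sub_half_mul_sqrt (β : ℝ) {μ h : ℝ} (hμ : 0 < μ) (hh : 0 < h) :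
    2 * (h / (2 * μ)) ^ (β - 1 / 2) * √(π / (2 * (μ * h))) =
      √π * 2 ^ (1 - β) * μ ^ (-β) * h ^ (β - 1) := by
  have sqrt_ratio : √(π / (2 * (μ * h))) = √(h / (2 * μ)) * √π / h := by
    rw [← sqrt_mul (by positivity), eq_div_iff hh.ne', ← sqrt_sq hh.le,
      ← sqrt_mul (by positivity), sqrt_sq hh.le]
    congr 1
    field_simp
  have base_pos : 0 < h / (2 * μ) := by positivity
  rw [sqrt_ratio, rpow_sub base_pos, ← sqrt_eq_rpow, div_rpow hh.le (by positivity),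
    mul_rpow zero_le_two hμ.le, rpow_sub two_pos, rpow_one, rpow_neg hμ.le, rpow_sub_one hh.ne']
  field_simp

theorem stmt9_general (μ β : ℝ) (hμ : 0 < μ) :
    Tendsto
      (fun h : ℝ =>
        (∫ z in Ioi (0 : ℝ), z ^ (β - 3 / 2) * exp (-μ ^ 2 * z - h ^ 2 / (4 * z))) /
          (√π * 2 ^ (1 - β) * μ ^ (-β) * h ^ (β - 1) * exp (-μ * h)))
      atTop (𝓝 1) := by
  have bessel_ratio : Tendsto
      (fun h => besselK (β - 1 / 2) (μ * h) / (√(π / (2 * (μ * h))) * exp (-(μ * h))))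
      atTop (𝓝 1) := by
    have nonzero : ∀ᶠ x : ℝ in atTop, √(π / (2 * x)) * exp (-x) ≠ 0 := by
      filter_upwards [eventually_gt_atTop 0] with x hx
      positivity
    exact ((isEquivalent_iff_tendsto_one nonzero).1 (besselK_isEquivalent_atTop _)).comp
      (tendsto_id.const_mul_atTop hμ)
  refine bessel_ratio.congr' ?_
  filter_upwards [eventually_gt_atTop 0] with h hh
  have prefactor_ne_zero : 2 * (h / (2 * μ)) ^ (β - 1 / 2) ≠ 0 := by positivity
  rw [show β - 3 / 2 = β - 1 / 2 - 1 by ring, integral_rpow_mul_exp_sub_eq_besselK _ hμ hh,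
    ← two_mul_rpow_sub_half_mul_sqrt β hμ hh, neg_mul, mul_assoc _ √_,
    mul_div_mul_left _ _ prefactor_ne_zero]

/-- Large-lag covariance asymptotics: for `μ > 0`, `β > 0`,
`∫₀^∞ z^{β−3/2} e^{−μ²z − h²/(4z)} dz ∼ √π 2^{1−β} μ^{−β} h^{β−1} e^{−μh}` as `h → ∞`. -/
theorem stmt9 (μ β : ℝ) (hμ : 0 < μ) (hβ : 0 < β) :
    Filter.Tendsto
      (fun h : ℝ =>
        (∫ z in Set.Ioi (0 : ℝ),
            z ^ (β - 3 / 2) * Real.exp (-μ ^ 2 * z - h ^ 2 / (4 * z))) /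
          (Real.sqrt Real.pi * 2 ^ (1 - β) * μ ^ (-β) * h ^ (β - 1) * Real.exp (-μ * h)))
      Filter.atTop (nhds 1) :=
  stmt9_general μ β hμ
end

section
/- Let α ∈ (0,1), λ > 0, and let f : ℝ → ℝ be measurable such that t ↦ e^{λt} f(t) is integrable on ℝ and (t,w) ↦ e^{λt} |f(t) − f(t+w)| w^{−1−α} is integrable on ℝ × (0,∞). Then ∫_ℝ e^{λt} [(α/Γ(1−α)) ∫₀^∞ (f(t) − f(t+w)) w^{−α−1} dw] dt = λ^α ∫_ℝ e^{λt} f(t) dt. -/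
open MeasureTheory Set Real

open Filter Topology Asymptotics

/-!
Exchange the order of integration. By translation invariance, the difference `f t - f (t + w)`
integrates against `e^{λt}` to `1 - e^{-λw}` times the transform of `f`, so everything reduces to
the scalar identity `∫₀^∞ w^{-α-1} (1 - e^{-λw}) dw = Γ(1-α)/α · λ^α`. An integration by parts
turns the left-hand side into the Gamma integral `(λ/α) ∫₀^∞ w^{-α} e^{-λw} dw`.
-/

section

variable {E : Type*} [NormedAddCommGroup E] [NormedSpace ℝ E]

theorem tendsto_rpow_smul_nhdsGT_zero_of_isBigO {f : ℝ → E} {b s : ℝ}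
    (hf : f =O[𝓝[>] 0] (· ^ (-b))) (hbs : b < s) :
    Tendsto (fun t : ℝ ↦ t ^ s • f t) (𝓝[>] 0) (𝓝 0) := by
  have hbound : (fun t : ℝ ↦ t ^ s • f t) =O[𝓝[>] 0] (fun t : ℝ ↦ t ^ (s - b)) := by
    refine ((isBigO_refl (fun t : ℝ ↦ t ^ s) _).smul hf).congr' .rfl ?_
    filter_upwards [self_mem_nhdsWithin] with t ht
    rw [smul_eq_mul, ← rpow_add ht, sub_eq_add_neg]
  have hlim : Tendsto (fun t : ℝ ↦ t ^ (s - b)) (𝓝[>] 0) (𝓝 0) := by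
    have hcont := (continuous_rpow_const (sub_pos.2 hbs).le).tendsto 0
    rw [zero_rpow (sub_pos.2 hbs).ne'] at hcont
    exact hcont.mono_left nhdsWithin_le_nhds
  exact hbound.trans_tendsto hlim

theorem tendsto_rpow_smul_atTop_zero_of_isBigO {f : ℝ → E} {a s : ℝ}
    (hf : f =O[atTop] (· ^ (-a))) (hsa : s < a) :
    Tendsto (fun t : ℝ ↦ t ^ s • f t) atTop (𝓝 0) := by
  have hbound : (fun t : ℝ ↦ t ^ s • f t) =O[atTop] (fun t : ℝ ↦ t ^ (-(a - s))) := by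
    refine ((isBigO_refl (fun t : ℝ ↦ t ^ s) _).smul hf).congr' .rfl ?_
    filter_upwards [eventually_gt_atTop 0] with t ht
    rw [smul_eq_mul, ← rpow_add ht, neg_sub, sub_eq_add_neg]
  exact hbound.trans_tendsto (tendsto_rpow_neg_atTop (sub_pos.2 hsa))

-- The exponents `-(-1)` here and `-0` below have the shape `-b`, `-a` in which
-- `mellin_convergent_of_isBigO_scalar` takes its growth rates.
theorem isBigO_one_sub_exp_neg_mul_nhdsGT_zero (l : ℝ) :
    (fun w : ℝ ↦ 1 - exp (-(l * w))) =O[𝓝[>] 0] (fun w : ℝ ↦ w ^ (-(-1) : ℝ)) := by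
  have hderiv : HasDerivAt (fun w : ℝ ↦ 1 - exp (-(l * w))) (-(exp (-(l * 0)) * -(l * 1))) 0 :=
    ((hasDerivAt_id (0 : ℝ)).const_mul l).neg.exp.const_sub 1
  simpa using hderiv.isBigO_sub.mono nhdsWithin_le_nhds

theorem isBigO_one_sub_exp_neg_mul_atTop {l : ℝ} (hl : 0 ≤ l) :
    (fun w : ℝ ↦ 1 - exp (-(l * w))) =O[atTop] (fun w : ℝ ↦ w ^ (-0 : ℝ)) := by
  refine .of_bound 1 ?_
  filter_upwards [eventually_ge_atTop 0] with w hw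
  have hexp : exp (-(l * w)) ≤ 1 := exp_le_one_iff.2 (neg_nonpos.2 (mul_nonneg hl hw))
  rw [neg_zero, rpow_zero, norm_one, mul_one, norm_of_nonneg (sub_nonneg.2 hexp)]
  exact sub_le_self 1 (exp_pos _).le

theorem integrableOn_rpow_mul_one_sub_exp_neg_mul {α l : ℝ} (hα : α ∈ Ioo 0 1) (hl : 0 ≤ l) :
    IntegrableOn (fun w : ℝ ↦ w ^ (-α - 1) * (1 - exp (-(l * w)))) (Ioi 0) :=
  mellin_convergent_of_isBigO_scalar
    ((Continuous.locallyIntegrable (by fun_prop)).locallyIntegrableOn _)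
    (isBigO_one_sub_exp_neg_mul_atTop hl) (neg_lt_zero.2 hα.1)
    (isBigO_one_sub_exp_neg_mul_nhdsGT_zero l) (neg_lt_neg hα.2)

theorem integrableOn_rpow_neg_mul_exp_neg_mul {α l : ℝ} (hα : α < 1) (hl : 0 < l) :
    IntegrableOn (fun w : ℝ ↦ w ^ (-α) * exp (-(l * w))) (Ioi 0) := by
  simpa using integrableOn_rpow_mul_exp_neg_mul_rpow (p := 1) (neg_lt_neg hα) one_pos hl

theorem integral_rpow_neg_mul_exp_neg_mul {α l : ℝ} (hα : α < 1) (hl : 0 < l) :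
    ∫ w in Ioi (0 : ℝ), w ^ (-α) * exp (-(l * w)) = l ^ (α - 1) * Gamma (1 - α) := by
  have hGamma := integral_rpow_mul_exp_neg_mul_Ioi (sub_pos.2 hα) hl
  rwa [sub_sub_cancel_left, one_div, inv_rpow hl.le, ← rpow_neg hl.le, neg_sub] at hGamma

theorem integral_rpow_mul_one_sub_exp_neg_mul {α l : ℝ} (hα : α ∈ Ioo 0 1) (hl : 0 < l) :
    ∫ w in Ioi (0 : ℝ), w ^ (-α - 1) * (1 - exp (-(l * w))) = Gamma (1 - α) / α * l ^ α := by
  have hpow : ∀ w ∈ Ioi (0 : ℝ), HasDerivAt (fun w ↦ w ^ (-α)) (-α * w ^ (-α - 1)) w :=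
    fun w hw ↦ hasDerivAt_rpow_const (.inl hw.ne')
  have hexp : ∀ w ∈ Ioi (0 : ℝ), HasDerivAt (fun w ↦ 1 - exp (-(l * w))) (l * exp (-(l * w))) w :=
    fun w _ ↦ (((hasDerivAt_id w).const_mul l).neg.exp.const_sub 1).congr_deriv (by simp [mul_comm])
  have hparts := integral_Ioi_mul_deriv_eq_deriv_mul hpow hexp
    (by simpa [IntegrableOn, Pi.mul_def, mul_left_comm] using
      (integrableOn_rpow_neg_mul_exp_neg_mul hα.2 hl).const_mul l)
    (by simpa [IntegrableOn, Pi.mul_def, mul_assoc] using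
      (integrableOn_rpow_mul_one_sub_exp_neg_mul hα hl.le).const_mul (-α))
    (tendsto_rpow_smul_nhdsGT_zero_of_isBigO (isBigO_one_sub_exp_neg_mul_nhdsGT_zero l)
      (neg_lt_neg hα.2))
    (tendsto_rpow_smul_atTop_zero_of_isBigO (isBigO_one_sub_exp_neg_mul_atTop hl.le)
      (neg_lt_zero.2 hα.1))
  simp_rw [mul_left_comm _ l, mul_assoc (-α), integral_const_mul,
    integral_rpow_neg_mul_exp_neg_mul hα.2 hl, rpow_sub_one hl.ne'] at hparts
  field_simp [hα.1.ne'] at hparts ⊢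
  linarith

theorem integral_exp_mul_smul_sub_comp_add_right {f : ℝ → E} {l : ℝ}
    (hf : Integrable fun t ↦ exp (l * t) • f t) (w : ℝ) :
    ∫ t, exp (l * t) • (f t - f (t + w)) = (1 - exp (-(l * w))) • ∫ t, exp (l * t) • f t := by
  have hshift (t : ℝ) :
      exp (l * t) • f (t + w) = exp (-(l * w)) • exp (l * (t + w)) • f (t + w) := by
    rw [smul_smul, ← exp_add]
    ring_nf
  simp_rw [smul_sub, hshift]
  rw [integral_sub hf ((hf.comp_add_right w).fun_smul _), integral_smul,
    integral_add_right_eq_self (fun t ↦ exp (l * t) • f t) w, sub_smul, one_smul]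

theorem aestronglyMeasurable_of_integrable_exp_mul_smul {f : ℝ → E} {l : ℝ} {μ : Measure ℝ}
    (hf : Integrable (fun t ↦ exp (l * t) • f t) μ) : AEStronglyMeasurable f μ := by
  have hexp : AEStronglyMeasurable (fun t ↦ exp (-(l * t))) μ :=
    Continuous.aestronglyMeasurable (by fun_prop)
  simpa [Pi.smul_def', smul_smul, ← exp_add] using hexp.smul hf.aestronglyMeasurable

theorem integrable_exp_mul_smul_rpow_smul_sub {f : ℝ → E} {l s : ℝ}
    (hf : AEStronglyMeasurable f)
    (hint : IntegrableOn (fun p : ℝ × ℝ ↦ exp (l * p.1) * ‖f p.1 - f (p.1 + p.2)‖ * p.2 ^ s)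
      (univ ×ˢ Ioi 0)) :
    Integrable (fun p : ℝ × ℝ ↦ exp (l * p.1) • p.2 ^ s • (f p.1 - f (p.1 + p.2)))
      (volume.prod (volume.restrict (Ioi 0))) := by
  have hmeasure : (volume : Measure ℝ).prod (volume.restrict (Ioi (0 : ℝ))) =
      volume.restrict (univ ×ˢ Ioi 0) := by
    rw [Measure.volume_eq_prod, ← Measure.prod_restrict, Measure.restrict_univ]
  have hdiff : AEStronglyMeasurable (fun p : ℝ × ℝ ↦ f p.1 - f (p.1 + p.2)) volume :=
    hf.comp_fst.sub (hf.comp_quasiMeasurePreserving (quasiMeasurePreserving_add volume volume))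
  have hexp : Measurable fun p : ℝ × ℝ ↦ exp (l * p.1) := by fun_prop
  have hpow : Measurable fun p : ℝ × ℝ ↦ p.2 ^ s := by fun_prop
  rw [hmeasure]
  refine hint.mono' (hexp.aestronglyMeasurable.smul
    (hpow.aestronglyMeasurable.smul hdiff.restrict)) ?_
  filter_upwards [ae_restrict_mem (MeasurableSet.univ.prod measurableSet_Ioi)] with p hp
  rw [norm_smul, norm_smul, norm_of_nonneg (exp_pos _).le,
    norm_of_nonneg (rpow_nonneg (le_of_lt hp.2) s), mul_comm (p.2 ^ s), mul_assoc]

/-- The Marchaud (upper Weyl) fractional derivative `d^α f / d(-t)^α` of order `α ∈ (0, 1)`, for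
functions with values in a normed space. It takes the junk value `0` at each `t` where the integral
does not converge absolutely. -/
noncomputable def marchaudDeriv (α : ℝ) (f : ℝ → E) (t : ℝ) : E :=
  (α / Gamma (1 - α)) • ∫ w in Ioi (0 : ℝ), w ^ (-α - 1) • (f t - f (t + w))

theorem stmt11_general [CompleteSpace E] {α l : ℝ} (hα : α ∈ Ioo 0 1) (hl : 0 < l) {f : ℝ → E}
    (hf : Integrable fun t ↦ exp (l * t) • f t)
    (hdiff : IntegrableOn
      (fun p : ℝ × ℝ ↦ exp (l * p.1) * ‖f p.1 - f (p.1 + p.2)‖ * p.2 ^ (-α - 1))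
      (univ ×ˢ Ioi 0)) :
    ∫ t, exp (l * t) • marchaudDeriv α f t = l ^ α • ∫ t, exp (l * t) • f t := by
  have hGamma : Gamma (1 - α) ≠ 0 := (Gamma_pos_of_pos (sub_pos.2 hα.2)).ne'
  have hα0 : α ≠ 0 := hα.1.ne'
  have hint := integrable_exp_mul_smul_rpow_smul_sub
    (aestronglyMeasurable_of_integrable_exp_mul_smul hf) hdiff
  calc ∫ t, exp (l * t) • marchaudDeriv α f t
      = (α / Gamma (1 - α)) • ∫ t, ∫ w in Ioi (0 : ℝ),
          exp (l * t) • w ^ (-α - 1) • (f t - f (t + w)) := by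
        simp_rw [marchaudDeriv, smul_comm (exp _) (α / Gamma (1 - α)), integral_smul]
    _ = (α / Gamma (1 - α)) • ∫ w in Ioi (0 : ℝ),
          w ^ (-α - 1) • ∫ t, exp (l * t) • (f t - f (t + w)) := by
        rw [integral_integral_swap hint]
        simp_rw [smul_comm (exp _), integral_smul]
    _ = (α / Gamma (1 - α)) • (Gamma (1 - α) / α * l ^ α) • ∫ t, exp (l * t) • f t := by
        simp_rw [integral_exp_mul_smul_sub_comp_add_right hf, smul_smul _ (1 - exp _),
          integral_smul_const, integral_rpow_mul_one_sub_exp_neg_mul hα hl]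
    _ = l ^ α • ∫ t, exp (l * t) • f t := by
        rw [smul_smul]
        field_simp

end

/-- The (two-sided) Laplace transform of the Marchaud (upper-Weyl) fractional derivative
`d^α f/d(−t)^α = (α/Γ(1−α)) ∫₀^∞ (f(t) − f(t+w)) w^{−α−1} dw` at `λ` equals
`λ^α` times the Laplace transform of `f`. -/
theorem stmt11 (α : ℝ) (hα : α ∈ Set.Ioo (0 : ℝ) 1) (l : ℝ) (hl : 0 < l) (f : ℝ → ℝ)
    (hf : Measurable f)
    (h1 : Integrable (fun t : ℝ => Real.exp (l * t) * f t))
    (h2 : IntegrableOn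
      (fun p : ℝ × ℝ => Real.exp (l * p.1) * |f p.1 - f (p.1 + p.2)| * p.2 ^ (-1 - α))
      (Set.univ ×ˢ Set.Ioi 0)) :
    ∫ t : ℝ,
        Real.exp (l * t) *
          ((α / Real.Gamma (1 - α)) *
            ∫ w in Set.Ioi (0 : ℝ), (f t - f (t + w)) * w ^ (-α - 1)) =
      l ^ α * ∫ t : ℝ, Real.exp (l * t) * f t := by
  rw [neg_sub_comm] at h2
  simpa only [marchaudDeriv, smul_eq_mul, mul_comm (_ ^ (-α - 1))] using stmt11_general hα hl h1 h2
end

section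
/- For every α ∈ (0,1), s > 0 and θ ∈ ℝ, the function z ↦ e^{iθz} h_α(z,s) is integrable on ℝ and ∫_ℝ e^{iθz} h_α(z,s) dz = exp(−s|θ|^α e^{−iπα·sgn(θ)/2}). -/
open MeasureTheory Set Real

/-- The stable subordinator density
`h_α(z,s) = (1/(2π)) ∫_ℝ exp(−iτz − s|τ|^α e^{−iπα·sgn(τ)/2}) dτ`. -/
noncomputable def hstable (α s z : ℝ) : ℂ :=
  ((2 * Real.pi)⁻¹ : ℝ) *
    ∫ τ : ℝ, Complex.exp (-(Complex.I * τ * z) -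
      ((s * |τ| ^ α : ℝ) : ℂ) *
        Complex.exp (-(Complex.I * ((Real.pi * α * Real.sign τ / 2 : ℝ) : ℂ))))

/-!
Write `φ τ = exp (-s (-iτ) ^ α)`, so that `hstable α s` is a rescaled Fourier transform of `φ`, and
the theorem is Fourier inversion for `φ` as soon as `𝓕 φ` is integrable. Translating by the half
period `h = 1 / (2w)` flips the sign of the character, so doing it twice bounds `4 |𝓕 φ w|` by the
`L¹` norm of the second difference of `φ` with step `h`. The only singularity of `φ` is that of
`|τ| ^ α` at `0`, so this second difference is `O(|h| ^ α)` for `|τ| ≤ 2|h|` and, by the mean value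
theorem, `O(h² |τ| ^ (α - 2))` beyond. Hence `𝓕 φ w = O(|w| ^ (-1 - α))`.
-/

section

open scoped FourierTransform RealInnerProductSpace

/-- The symmetric second difference `f (x + h) - 2 f x + f (x - h)`, whose `L¹` norm controls `𝓕 f`.
It is written as a difference of differences, so that only group structures are needed. -/
def secondDiff {V E : Type*} [AddGroup V] [AddGroup E] (h : V) (f : V → E) (x : V) : E :=
  f (x + h) - f x - (f x - f (x - h))

section SecondDiff

variable {E : Type*} [NormedAddCommGroup E] {f : ℝ → E}

lemma norm_secondDiff_le_of_norm_sub_le {V : Type*} [AddGroup V] {f : V → E} {c : E} {M : ℝ}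
    {x h : V} (hr : ‖f (x + h) - c‖ ≤ M) (hm : ‖f x - c‖ ≤ M) (hl : ‖f (x - h) - c‖ ≤ M) :
    ‖secondDiff h f x‖ ≤ 4 * M := by
  have hsplit : secondDiff h f x =
      (f (x + h) - c) - (f x - c) - ((f x - c) - (f (x - h) - c)) := by
    simp only [secondDiff, sub_sub_sub_cancel_right]
  rw [hsplit]
  linarith [norm_sub_le ((f (x + h) - c) - (f x - c)) ((f x - c) - (f (x - h) - c)),
    norm_sub_le (f (x + h) - c) (f x - c), norm_sub_le (f x - c) (f (x - h) - c)]

lemma norm_secondDiff_le_of_abs_le_two_mul {α A : ℝ} (hα : 0 ≤ α) (hα' : α ≤ 2)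
    (hf : ∀ x, ‖f x - f 0‖ ≤ A * |x| ^ α) {h : ℝ} (hh : h ≠ 0) {x : ℝ} (hx : |x| ≤ 2 * |h|) :
    ‖secondDiff h f x‖ ≤ 36 * A * |h| ^ α * (1 + |x / h|) ^ (α - 2) := by
  have hA : 0 ≤ A := by simpa using (norm_nonneg _).trans (hf 1)
  have hh0 : 0 < |h| := abs_pos.2 hh
  have hratio : |x / h| ≤ 2 := by rwa [abs_div, div_le_iff₀ hh0]
  have hnear {y : ℝ} (hy : |y| ≤ 3 * |h|) : ‖f y - f 0‖ ≤ A * (3 * |h|) ^ α :=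
    (hf y).trans (by gcongr)
  calc ‖secondDiff h f x‖
      ≤ 4 * (A * (3 * |h|) ^ α) :=
        norm_secondDiff_le_of_norm_sub_le (hnear ((abs_add_le x h).trans (by linarith)))
          (hnear (by linarith)) (hnear ((abs_sub x h).trans (by linarith)))
    _ = 36 * A * |h| ^ α * 3 ^ (α - 2) := by
      rw [mul_rpow zero_le_three hh0.le, rpow_sub zero_lt_three, rpow_two]
      ring
    _ ≤ 36 * A * |h| ^ α * (1 + |x / h|) ^ (α - 2) := by
      gcongr ?_ * ?_
      exact rpow_le_rpow_of_nonpos (by positivity) (by linarith) (by linarith)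

variable [NormedSpace ℝ E] {f' f'' : ℝ → E}

lemma norm_secondDiff_le_of_norm_deriv2_le {x h M : ℝ}
    (hf : ∀ y ∈ Metric.closedBall x |h|, HasDerivAt f (f' y) y)
    (hf' : ∀ y ∈ Metric.closedBall x |h|, HasDerivAt f' (f'' y) y)
    (hM : ∀ y ∈ Metric.closedBall x |h|, ‖f'' y‖ ≤ M) :
    ‖secondDiff h f x‖ ≤ M * h ^ 2 := by
  have hmem {t : ℝ} (ht : |t| ≤ 1) : x + t * h ∈ Metric.closedBall x |h| := by
    simpa [abs_mul] using mul_le_of_le_one_left (abs_nonneg h) ht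
  have hderiv {t : ℝ} (u : ℝ) (ht : |t + u| ≤ 1) :
      HasDerivAt (fun t ↦ f (x + (t + u) * h)) (h • f' (x + (t + u) * h)) t := by
    have hline : HasDerivAt (fun t : ℝ ↦ x + (t + u) * h) h t := by
      simpa using (((hasDerivAt_id t).add_const u).mul_const h).const_add x
    exact (hf _ (hmem ht)).scomp t hline
  have habs {t : ℝ} (ht : t ∈ Icc (0 : ℝ) 1) : |t + 0| ≤ 1 ∧ |t + -1| ≤ 1 := by
    constructor <;> rw [abs_le] <;> constructor <;> linarith [ht.1, ht.2]
  have hmvt := norm_image_sub_le_of_norm_deriv_le_segment_01'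
    (f := fun t ↦ f (x + (t + 0) * h) - f (x + (t + -1) * h))
    (f' := fun t ↦ h • f' (x + (t + 0) * h) - h • f' (x + (t + -1) * h)) (C := M * h ^ 2)
    (fun t ht ↦ ((hderiv 0 (habs ht).1).sub (hderiv (-1) (habs ht).2)).hasDerivWithinAt)
    (fun t ht ↦ ?_)
  · simpa [secondDiff, sub_eq_add_neg] using hmvt
  · have hlip := Convex.norm_image_sub_le_of_norm_hasDerivWithin_le
      (fun y hy ↦ (hf' y hy).hasDerivWithinAt) hM (convex_closedBall x |h|)
      (hmem (habs (Ico_subset_Icc_self ht)).2) (hmem (habs (Ico_subset_Icc_self ht)).1)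
    rw [← smul_sub, norm_smul, ← sq_abs]
    calc ‖h‖ * ‖f' (x + (t + 0) * h) - f' (x + (t + -1) * h)‖
        ≤ ‖h‖ * (M * ‖x + (t + 0) * h - (x + (t + -1) * h)‖) := by gcongr
      _ = M * |h| ^ 2 := by
        rw [show x + (t + 0) * h - (x + (t + -1) * h) = h by ring, Real.norm_eq_abs]
        ring

lemma norm_secondDiff_le_of_two_mul_lt_abs {α B : ℝ} (hα : 0 ≤ α) (hα' : α ≤ 2)
    (hf : ∀ x ≠ 0, HasDerivAt f (f' x) x) (hf' : ∀ x ≠ 0, HasDerivAt f' (f'' x) x)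
    (hf'' : ∀ x ≠ 0, ‖f'' x‖ ≤ B * |x| ^ (α - 2)) {h : ℝ} (hh : h ≠ 0) {x : ℝ}
    (hx : 2 * |h| < |x|) :
    ‖secondDiff h f x‖ ≤ 16 * B * |h| ^ α * (1 + |x / h|) ^ (α - 2) := by
  have hB : 0 ≤ B := by simpa using (norm_nonneg _).trans (hf'' 1 one_ne_zero)
  have hh0 : 0 < |h| := abs_pos.2 hh
  set t : ℝ := |x / h| with ht
  have hxt : |x| = t * |h| := by rw [ht, abs_div, div_mul_cancel₀ _ hh0.ne']
  have hfar {y : ℝ} (hy : y ∈ Metric.closedBall x |h|) : (1 + t) / 4 * |h| ≤ |y| := by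
    rw [Metric.mem_closedBall, dist_comm, Real.dist_eq] at hy
    linarith [abs_sub_abs_le_abs_sub x y]
  have hne {y : ℝ} (hy : y ∈ Metric.closedBall x |h|) : y ≠ 0 :=
    abs_pos.1 ((by positivity : 0 < (1 + t) / 4 * |h|).trans_le (hfar hy))
  have hderiv2 {y : ℝ} (hy : y ∈ Metric.closedBall x |h|) :
      ‖f'' y‖ ≤ B * ((1 + t) / 4 * |h|) ^ (α - 2) := by
    refine (hf'' y (hne hy)).trans (mul_le_mul_of_nonneg_left ?_ hB)
    exact rpow_le_rpow_of_nonpos (by positivity) (hfar hy) (by linarith)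
  calc ‖secondDiff h f x‖
      ≤ B * ((1 + t) / 4 * |h|) ^ (α - 2) * h ^ 2 :=
        norm_secondDiff_le_of_norm_deriv2_le (fun y hy ↦ hf y (hne hy))
          (fun y hy ↦ hf' y (hne hy)) (fun y hy ↦ hderiv2 hy)
    _ = 16 / 4 ^ α * B * |h| ^ α * (1 + t) ^ (α - 2) := by
      rw [mul_rpow (by positivity) hh0.le, div_rpow (by positivity) zero_le_four,
        rpow_sub hh0, rpow_sub zero_lt_four, rpow_two, rpow_two, sq_abs]
      field_simp
      norm_num
    _ ≤ 16 * B * |h| ^ α * (1 + t) ^ (α - 2) := by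
      gcongr
      exact div_le_self (by norm_num) (one_le_rpow (by norm_num) hα)

/-- `f : ℝ → E` is twice differentiable away from `0`, with derivatives `f'` and `f''` there, and
behaves at `0` no worse than `f 0 + |x| ^ α`: its increment from `0` is at most `A |x| ^ α` and its
second derivative at most `B |x| ^ (α - 2)`. The bounds are global, so they also control `f''` at
infinity; this is what makes the Fourier transform of `f` decay like `|w| ^ (-1 - α)`. -/
structure HasPowerSingularity (f f' f'' : ℝ → E) (α A B : ℝ) : Prop where
  norm_sub_le (x : ℝ) : ‖f x - f 0‖ ≤ A * |x| ^ α
  hasDerivAt (x : ℝ) (hx : x ≠ 0) : HasDerivAt f (f' x) x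
  hasDerivAt_deriv (x : ℝ) (hx : x ≠ 0) : HasDerivAt f' (f'' x) x
  norm_deriv2_le (x : ℝ) (hx : x ≠ 0) : ‖f'' x‖ ≤ B * |x| ^ (α - 2)

namespace HasPowerSingularity

variable {α A B : ℝ}

lemma incr_const_nonneg (hf : HasPowerSingularity f f' f'' α A B) : 0 ≤ A := by
  simpa using (norm_nonneg _).trans (hf.norm_sub_le 1)

lemma deriv2_const_nonneg (hf : HasPowerSingularity f f' f'' α A B) : 0 ≤ B := by
  simpa using (norm_nonneg _).trans (hf.norm_deriv2_le 1 one_ne_zero)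

lemma norm_secondDiff_le (hf : HasPowerSingularity f f' f'' α A B) (hα : 0 ≤ α) (hα' : α ≤ 2)
    {h : ℝ} (hh : h ≠ 0) (x : ℝ) :
    ‖secondDiff h f x‖ ≤ (36 * A + 16 * B) * |h| ^ α * (1 + |x / h|) ^ (α - 2) := by
  have hA := hf.incr_const_nonneg
  have hB := hf.deriv2_const_nonneg
  rcases le_or_gt |x| (2 * |h|) with hx | hx
  · refine (norm_secondDiff_le_of_abs_le_two_mul hα hα' hf.norm_sub_le hh hx).trans ?_
    gcongr
    linarith
  · refine (norm_secondDiff_le_of_two_mul_lt_abs hα hα' hf.hasDerivAt hf.hasDerivAt_deriv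
      hf.norm_deriv2_le hh hx).trans ?_
    gcongr
    linarith

end HasPowerSingularity

end SecondDiff

section FourierDecay

variable {E : Type*} [NormedAddCommGroup E] [NormedSpace ℂ E]

lemma norm_fourier_le_integral_norm_secondDiff {V : Type*} [NormedAddCommGroup V]
    [InnerProductSpace ℝ V] [MeasurableSpace V] [BorelSpace V] [FiniteDimensional ℝ V]
    {f : V → E} (hf : Integrable f) {w : V} (hw : w ≠ 0) :
    ‖𝓕 f w‖ ≤ 1 / 4 * ∫ x, ‖secondDiff ((1 / (2 * ‖w‖ ^ 2) : ℝ) • w) f x‖ := by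
  set h : V := (1 / (2 * ‖w‖ ^ 2) : ℝ) • w
  have hshift : ∫ x, ‖secondDiff h f x‖ = ∫ x, ‖secondDiff h f (x + h)‖ :=
    (integral_add_right_eq_self (fun x ↦ ‖secondDiff h f x‖) h).symm
  have hfourier : 𝓕 f w = (1 / 4 : ℂ) • ∫ v, 𝐞 (-⟪v, w⟫) • secondDiff h f (v + h) := by
    rw [Real.fourier_eq, fourierIntegral_eq_half_sub_half_period_translate hw hf,
      fourierIntegral_eq_half_sub_half_period_translate (f := fun v ↦ f v - f (v + h)) hw
        (hf.sub (hf.comp_add_right h)), smul_smul]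
    congr 1
    · norm_num
    · congr with v
      simp only [secondDiff, add_sub_cancel_right]
      congr 1
      change f v - f (v + h) - (f (v + h) - f (v + h + h)) = _
      abel
  rw [hfourier, hshift, norm_smul, show ‖(1 / 4 : ℂ)‖ = 1 / 4 by norm_num]
  gcongr
  simpa only [Circle.norm_smul] using
    norm_integral_le_integral_norm fun v ↦ 𝐞 (-⟪v, w⟫) • secondDiff h f (v + h)

namespace HasPowerSingularity

variable {f f' f'' : ℝ → E} {α A B : ℝ}

lemma norm_fourier_le (hf : HasPowerSingularity f f' f'' α A B) (hint : Integrable f)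
    (hα : 0 ≤ α) (hα' : α < 1) {w : ℝ} (hw : w ≠ 0) :
    ‖𝓕 f w‖ ≤ (9 * A + 4 * B) * (∫ x : ℝ, (1 + |x|) ^ (α - 2)) * |2 * w| ^ (-(1 + α)) := by
  have hperiod : (1 / (2 * ‖w‖ ^ 2) : ℝ) • w = (2 * w)⁻¹ := by
    rw [Real.norm_eq_abs, sq_abs, smul_eq_mul]
    field_simp
  have hbracket : Integrable fun x : ℝ ↦ (1 + |x|) ^ (α - 2) := by
    simpa using integrable_one_add_norm (E := ℝ) (μ := volume) (r := 2 - α)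
      (by rw [Module.finrank_self, Nat.cast_one]; linarith)
  set h : ℝ := (2 * w)⁻¹ with hhw
  have hh : h ≠ 0 := inv_ne_zero (mul_ne_zero two_ne_zero hw)
  calc ‖𝓕 f w‖
      ≤ 1 / 4 * ∫ x, ‖secondDiff h f x‖ :=
        hperiod ▸ norm_fourier_le_integral_norm_secondDiff hint hw
    _ ≤ 1 / 4 * ∫ x, (36 * A + 16 * B) * |h| ^ α * (1 + |x / h|) ^ (α - 2) := by
      refine mul_le_mul_of_nonneg_left ?_ (by norm_num)
      exact integral_mono_of_nonneg (.of_forall fun _ ↦ norm_nonneg _)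
        ((hbracket.comp_div hh).const_mul _)
        (.of_forall (hf.norm_secondDiff_le hα (by linarith) hh))
    _ = (9 * A + 4 * B) * (∫ x : ℝ, (1 + |x|) ^ (α - 2)) * (|h| * |h| ^ α) := by
      rw [integral_const_mul, Measure.integral_comp_div (fun y : ℝ ↦ (1 + |y|) ^ (α - 2)),
        smul_eq_mul]
      ring
    _ = (9 * A + 4 * B) * (∫ x : ℝ, (1 + |x|) ^ (α - 2)) * |2 * w| ^ (-(1 + α)) := by
      rw [← rpow_one_add' (abs_nonneg h) (by positivity), hhw, abs_inv,
        inv_rpow (abs_nonneg _), rpow_neg (abs_nonneg _)]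

theorem integrable_fourier (hf : HasPowerSingularity f f' f'' α A B) (hint : Integrable f)
    (hα : 0 < α) (hα' : α < 1) :
    Integrable (𝓕 f) := by
  have hcont : Continuous (𝓕 f) :=
    VectorFourier.fourierIntegral_continuous Real.continuous_fourierChar
      (innerSL ℝ : ℝ →L[ℝ] ℝ →L[ℝ] ℝ).continuous₂ hint
  have hbracket : Integrable fun w : ℝ ↦ (1 + ‖w‖) ^ (-(1 + α)) :=
    integrable_one_add_norm (by simpa using hα)
  refine hcont.locallyIntegrable.integrable_of_isBigO_cocompact
    (.of_bound ((9 * A + 4 * B) * ∫ x : ℝ, (1 + |x|) ^ (α - 2)) ?_)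
    (hbracket.integrableAtFilter _)
  filter_upwards [(tendsto_norm_cocompact_atTop (E := ℝ)).eventually_ge_atTop 1] with w hw
  have hA := hf.incr_const_nonneg
  have hB := hf.deriv2_const_nonneg
  have hw0 : w ≠ 0 := norm_pos_iff.1 (one_pos.trans_le hw)
  have hcompare : |2 * w| ^ (-(1 + α)) ≤ ‖(1 + ‖w‖) ^ (-(1 + α))‖ := by
    rw [Real.norm_of_nonneg (by positivity), abs_mul, abs_two, ← Real.norm_eq_abs w]
    exact rpow_le_rpow_of_nonpos (by positivity) (by linarith) (by linarith)
  refine (hf.norm_fourier_le hint hα.le hα' hw0).trans ?_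
  gcongr

end HasPowerSingularity

end FourierDecay

section AngularFrequency

variable {E : Type*} [NormedAddCommGroup E] [NormedSpace ℂ E]

lemma integrable_exp_I_mul_smul {g : ℝ → E} (hg : Integrable g) (θ : ℝ) :
    Integrable fun z : ℝ ↦ Complex.exp (Complex.I * θ * z) • g z := by
  refine hg.bdd_smul 1 (by fun_prop) (.of_forall fun z ↦ le_of_eq ?_)
  rw [mul_assoc, ← Complex.ofReal_mul, Complex.norm_exp_I_mul_ofReal]

lemma fourier_div_two_pi (f : ℝ → E) (z : ℝ) :
    𝓕 f (z / (2 * π)) = ∫ τ : ℝ, Complex.exp (-(Complex.I * τ * z)) • f τ := by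
  rw [Real.fourier_real_eq_integral_exp_smul]
  congr! 4 with τ
  push_cast
  field_simp

lemma integral_exp_I_mul_smul_fourier_div_two_pi [CompleteSpace E] {f : ℝ → E}
    (hcont : Continuous f) (hint : Integrable f) (hfourier : Integrable (𝓕 f)) (θ : ℝ) :
    ∫ z : ℝ, Complex.exp (Complex.I * θ * z) • 𝓕 f (z / (2 * π)) = (2 * π) • f θ := by
  have hinversion : ∫ w : ℝ, Complex.exp (2 * π * Complex.I * θ * w) • 𝓕 f w = f θ := by
    rw [← congrFun (hcont.fourierInv_fourier_eq hint hfourier) θ, Real.fourierInv_eq']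
    congr! 4 with w
    simp only [RCLike.inner_apply, conj_trivial]
    push_cast
    ring
  have hscale := Measure.integral_comp_div
    (fun w : ℝ ↦ Complex.exp (2 * π * Complex.I * θ * w) • 𝓕 f w) (2 * π)
  rw [hinversion, abs_of_pos two_pi_pos] at hscale
  rw [← hscale]
  congr! 4 with z
  push_cast
  field_simp

end AngularFrequency

section StableLaplace

lemma norm_exp_sub_one_le_norm_of_re_nonpos {z : ℂ} (hz : z.re ≤ 0) :
    ‖Complex.exp z - 1‖ ≤ ‖z‖ := by
  simpa using Convex.norm_image_sub_le_of_norm_hasDerivWithin_le (C := 1)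
    (s := {w : ℂ | w.re ≤ 0}) (fun w _ ↦ (Complex.hasDerivAt_exp w).hasDerivWithinAt)
    (fun w (hw : w.re ≤ 0) ↦ by rwa [Complex.norm_exp, Real.exp_le_one_iff])
    (convex_halfSpace_re_le 0) (x := 0) (le_refl (0 : ℝ)) hz

lemma one_add_mul_exp_neg_mul_le {c x : ℝ} (hc : 0 < c) (hx : 0 ≤ x) :
    (1 + x) * Real.exp (-(c * x)) ≤ 1 + c⁻¹ := by
  rw [Real.exp_neg, ← div_eq_mul_inv, div_le_iff₀ (Real.exp_pos _)]
  calc 1 + x ≤ (1 + c⁻¹) * (c * x + 1) := by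
        have hcancel : c⁻¹ * (c * x) = x := inv_mul_cancel_left₀ hc.ne' x
        linarith [inv_pos.2 hc, mul_nonneg hc.le hx]
    _ ≤ (1 + c⁻¹) * Real.exp (c * x) := by
        gcongr
        exact Real.add_one_le_exp _

lemma integrable_exp_neg_mul_abs_rpow {p b : ℝ} (hp : 0 < p) (hb : 0 < b) :
    Integrable fun x : ℝ ↦ Real.exp (-b * |x| ^ p) := by
  refine (integrable_fun_norm_addHaar volume (f := fun y : ℝ ↦ Real.exp (-b * y ^ p))).2 ?_
  simpa using integrableOn_rpow_mul_exp_neg_mul_rpow (s := 0) (by norm_num) hp hb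

lemma cos_mul_norm_rpow_le_re_cpow {w : ℂ} (hw : 0 ≤ w.re) {α : ℝ} (hα : 0 ≤ α) (hα' : α ≤ 2) :
    Real.cos (π * α / 2) * ‖w‖ ^ α ≤ (w ^ (α : ℂ)).re := by
  have harg : |w.arg| ≤ π / 2 := Complex.abs_arg_le_pi_div_two_iff.2 hw
  have hcos : Real.cos (π * α / 2) ≤ Real.cos (w.arg * α) := by
    rw [← Real.cos_abs (w.arg * α), abs_mul, abs_of_nonneg hα]
    refine Real.cos_le_cos_of_nonneg_of_le_pi (by positivity) ?_ ?_ <;> nlinarith [pi_pos]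
  rw [Complex.cpow_ofReal_re, mul_comm]
  gcongr

lemma cos_pi_mul_div_two_pos {α : ℝ} (hα : α ∈ Ioo (-1 : ℝ) 1) : 0 < Real.cos (π * α / 2) := by
  refine Real.cos_pos_of_mem_Ioo ⟨?_, ?_⟩ <;> nlinarith [pi_pos, hα.1, hα.2]

lemma arg_neg_I_mul_ofReal (τ : ℝ) :
    (-(Complex.I * τ)).arg = -(π / 2 * Real.sign τ) := by
  rcases lt_trichotomy τ 0 with hτ | rfl | hτ
  · rw [show -(Complex.I * τ) = ((-τ : ℝ) : ℂ) * Complex.I by push_cast; ring,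
      Complex.arg_real_mul _ (neg_pos.2 hτ), Complex.arg_I, Real.sign_of_neg hτ]
    ring
  · simp
  · rw [show -(Complex.I * τ) = τ * -Complex.I by ring,
      Complex.arg_real_mul _ hτ, Complex.arg_neg_I, Real.sign_of_pos hτ, mul_one]

lemma cpow_neg_I_mul_ofReal (α τ : ℝ) :
    (-(Complex.I * τ)) ^ (α : ℂ) = ((|τ| ^ α : ℝ) : ℂ) *
      Complex.exp (-(Complex.I * ((π * α * Real.sign τ / 2 : ℝ) : ℂ))) := by
  have hangle : -(Complex.I * ((π * α * Real.sign τ / 2 : ℝ) : ℂ)) =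
      ((-(π / 2 * Real.sign τ) * α : ℝ) : ℂ) * Complex.I := by
    push_cast
    ring
  rw [Complex.cpow_ofReal, arg_neg_I_mul_ofReal, hangle, Complex.exp_mul_I, norm_neg, norm_mul,
    Complex.norm_I, one_mul, Complex.norm_real, Real.norm_eq_abs, Complex.ofReal_cos,
    Complex.ofReal_sin]

/-- The Laplace transform `w ↦ exp (-s w ^ α)` of the density `h_α(·, s)`, in the principal branch
of the power. On the imaginary axis, at `w = -iτ`, it is the characteristic function at `τ`. -/
noncomputable def stableLaplace (α s : ℝ) (w : ℂ) : ℂ :=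
  Complex.exp (-(s * w ^ (α : ℂ)))

variable {α s : ℝ} {w : ℂ}

lemma norm_stableLaplace_le (hα : 0 ≤ α) (hα' : α ≤ 2) (hs : 0 ≤ s) (hw : 0 ≤ w.re) :
    ‖stableLaplace α s w‖ ≤ Real.exp (-(s * Real.cos (π * α / 2)) * ‖w‖ ^ α) := by
  rw [stableLaplace, Complex.norm_exp, Complex.neg_re, Complex.re_ofReal_mul, neg_mul, mul_assoc]
  gcongr
  exact cos_mul_norm_rpow_le_re_cpow hw hα hα'

lemma norm_stableLaplace_sub_one_le (hα : 0 ≤ α) (hα' : α ≤ 1) (hs : 0 ≤ s) (hw : 0 ≤ w.re) :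
    ‖stableLaplace α s w - 1‖ ≤ s * ‖w‖ ^ α := by
  have hre : 0 ≤ (w ^ (α : ℂ)).re := by
    refine le_trans (mul_nonneg ?_ (by positivity))
      (cos_mul_norm_rpow_le_re_cpow hw hα (by linarith))
    refine Real.cos_nonneg_of_mem_Icc ⟨?_, ?_⟩ <;> nlinarith [pi_pos]
  refine (norm_exp_sub_one_le_norm_of_re_nonpos ?_).trans_eq ?_
  · rw [Complex.neg_re, Complex.re_ofReal_mul]
    exact neg_nonpos.2 (mul_nonneg hs hre)
  · rw [norm_neg, norm_mul, Complex.norm_real, Real.norm_of_nonneg hs, Complex.norm_cpow_real]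

lemma hasDerivAt_stableLaplace (hw : w ∈ Complex.slitPlane) :
    HasDerivAt (stableLaplace α s)
      (-(s * α * w ^ (α - 1 : ℂ)) * stableLaplace α s w) w := by
  convert! (((hasDerivAt_id w).cpow_const (c := α) hw).const_mul (s : ℂ)).neg.cexp using 1
  simp only [stableLaplace, id, Pi.neg_apply]
  ring

lemma hasDerivAt_deriv_stableLaplace (hw : w ∈ Complex.slitPlane) :
    HasDerivAt (fun w ↦ -(s * α * w ^ (α - 1 : ℂ)) * stableLaplace α s w)
      (s * α * w ^ (α - 2 : ℂ) * (1 - α + s * α * w ^ (α : ℂ)) * stableLaplace α s w) w := by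
  have hw0 : w ≠ 0 := Complex.slitPlane_ne_zero hw
  convert! (((hasDerivAt_id w).cpow_const (c := α - 1) hw).const_mul (s * α : ℂ)).neg.mul
    (hasDerivAt_stableLaplace (α := α) (s := s) hw) using 1
  simp only [id, Pi.neg_apply, Complex.cpow_sub _ _ hw0, Complex.cpow_one, Complex.cpow_ofNat]
  field_simp
  ring

lemma norm_deriv2_stableLaplace_le (hα : α ∈ Ioo (0 : ℝ) 1) (hs : 0 ≤ s) (hw : 0 ≤ w.re) :
    ‖s * α * w ^ (α - 2 : ℂ) * (1 - α + s * α * w ^ (α : ℂ)) * stableLaplace α s w‖ ≤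
      s * (1 + (Real.cos (π * α / 2))⁻¹) * ‖w‖ ^ (α - 2) := by
  obtain ⟨hα0, hα1⟩ := hα
  have hcos := cos_pi_mul_div_two_pos (α := α) ⟨by linarith, hα1⟩
  set c := Real.cos (π * α / 2)
  set r := ‖w‖ ^ α
  have hF : ‖stableLaplace α s w‖ ≤ Real.exp (-(c * (s * r))) := by
    simpa only [neg_mul, mul_assoc, mul_left_comm c] using
      norm_stableLaplace_le hα0.le (by linarith) hs hw
  have hfactor : ‖(1 - α + s * α * w ^ (α : ℂ) : ℂ)‖ ≤ 1 + s * r := by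
    calc ‖(1 - α + s * α * w ^ (α : ℂ) : ℂ)‖
        ≤ ‖((1 - α : ℝ) : ℂ)‖ + ‖((s * α : ℝ) : ℂ) * w ^ (α : ℂ)‖ := by
          simpa only [Complex.ofReal_sub, Complex.ofReal_one, Complex.ofReal_mul] using
            norm_add_le (1 - α : ℂ) (s * α * w ^ (α : ℂ))
      _ = (1 - α) + s * α * r := by
          rw [norm_mul, Complex.norm_real, Complex.norm_real, Complex.norm_cpow_real,
            Real.norm_of_nonneg (by linarith), Real.norm_of_nonneg (by positivity)]
      _ ≤ 1 + s * r := by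
          have hsr : s * α * r ≤ s * 1 * r := by gcongr
          linarith
  have hpow : ‖(s * α * w ^ (α - 2 : ℂ) : ℂ)‖ ≤ s * ‖w‖ ^ (α - 2) := by
    rw [show (α - 2 : ℂ) = ((α - 2 : ℝ) : ℂ) by push_cast; rfl, ← Complex.ofReal_mul, norm_mul,
      Complex.norm_real, Complex.norm_cpow_real, Real.norm_of_nonneg (by positivity)]
    gcongr
    exact mul_le_of_le_one_right hs hα1.le
  calc _ ≤ s * ‖w‖ ^ (α - 2) * (1 + s * r) * Real.exp (-(c * (s * r))) := by
        rw [norm_mul, norm_mul]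
        gcongr
    _ ≤ s * (1 + c⁻¹) * ‖w‖ ^ (α - 2) := by
        rw [mul_assoc, mul_right_comm s]
        gcongr
        exact one_add_mul_exp_neg_mul_le hcos (by positivity)

end StableLaplace

section StableCharFun

variable {α s : ℝ}

lemma stableLaplace_neg_I_mul_ofReal (α s τ : ℝ) :
    stableLaplace α s (-(Complex.I * τ)) = Complex.exp (-((s * |τ| ^ α : ℝ) : ℂ) *
      Complex.exp (-(Complex.I * ((π * α * Real.sign τ / 2 : ℝ) : ℂ)))) := by
  rw [stableLaplace, cpow_neg_I_mul_ofReal, ← mul_assoc, ← Complex.ofReal_mul, neg_mul]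

lemma continuous_stableLaplace_neg_I_mul (hα : 0 < α) :
    Continuous fun τ : ℝ ↦ stableLaplace α s (-(Complex.I * τ)) := by
  have hpow : Continuous fun τ : ℝ ↦ (-(Complex.I * τ)) ^ (α : ℂ) :=
    continuous_iff_continuousAt.2 fun τ ↦
      (Complex.continuousAt_cpow_const_of_re_pos (by simp) (by simpa)).comp
        (f := fun τ : ℝ ↦ -(Complex.I * τ)) (by fun_prop)
  unfold stableLaplace
  fun_prop

lemma integrable_stableLaplace_neg_I_mul (hα : α ∈ Ioo (0 : ℝ) 1) (hs : 0 < s) :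
    Integrable fun τ : ℝ ↦ stableLaplace α s (-(Complex.I * τ)) := by
  have hcos := cos_pi_mul_div_two_pos (α := α) ⟨by linarith [hα.1], hα.2⟩
  refine (integrable_exp_neg_mul_abs_rpow hα.1 (mul_pos hs hcos)).mono'
    (continuous_stableLaplace_neg_I_mul hα.1).aestronglyMeasurable (.of_forall fun τ ↦ ?_)
  simpa using norm_stableLaplace_le (w := -(Complex.I * τ)) hα.1.le (by linarith [hα.2]) hs.le
    (by simp)

lemma hasPowerSingularity_stableLaplace_neg_I_mul (hα : α ∈ Ioo (0 : ℝ) 1) (hs : 0 ≤ s) :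
    HasPowerSingularity (fun τ : ℝ ↦ stableLaplace α s (-(Complex.I * τ)))
      (fun τ : ℝ ↦ -Complex.I * (-(s * α * (-(Complex.I * τ)) ^ (α - 1 : ℂ)) *
        stableLaplace α s (-(Complex.I * τ))))
      (fun τ : ℝ ↦ -Complex.I * (-Complex.I * (s * α * (-(Complex.I * τ)) ^ (α - 2 : ℂ) *
        (1 - α + s * α * (-(Complex.I * τ)) ^ (α : ℂ)) * stableLaplace α s (-(Complex.I * τ)))))
      α s (s * (1 + (Real.cos (π * α / 2))⁻¹)) := by
  have hre (τ : ℝ) : 0 ≤ (-(Complex.I * τ)).re := by simp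
  have hnorm (τ : ℝ) : ‖-(Complex.I * τ)‖ = |τ| := by simp
  have hslit {τ : ℝ} (hτ : τ ≠ 0) : -(Complex.I * τ) ∈ Complex.slitPlane :=
    Complex.mem_slitPlane_iff.2 (.inr (by simpa using hτ))
  have hline (τ : ℝ) : HasDerivAt (fun τ : ℝ ↦ -(Complex.I * τ)) (-Complex.I) τ := by
    simpa using ((hasDerivAt_id τ).ofReal_comp.const_mul Complex.I).fun_neg
  refine ⟨fun τ ↦ ?_, fun τ hτ ↦ ?_, fun τ hτ ↦ ?_, fun τ _ ↦ ?_⟩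
  · simpa [stableLaplace, hα.1.ne'] using
      norm_stableLaplace_sub_one_le hα.1.le hα.2.le hs (hre τ)
  · simpa only [Function.comp_def, smul_eq_mul] using
      (hasDerivAt_stableLaplace (hslit hτ)).scomp τ (hline τ)
  · exact ((hasDerivAt_deriv_stableLaplace (hslit hτ)).scomp τ (hline τ)).const_mul _
  · simpa only [norm_mul, norm_neg, Complex.norm_I, one_mul, hnorm] using
      norm_deriv2_stableLaplace_le hα hs (hre τ)

lemma hstable_eq_fourier (α s z : ℝ) :
    hstable α s z = ((2 * π)⁻¹ : ℝ) *
      𝓕 (fun τ : ℝ ↦ stableLaplace α s (-(Complex.I * τ))) (z / (2 * π)) := by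
  rw [hstable, fourier_div_two_pi]
  congr! 3 with τ
  rw [stableLaplace_neg_I_mul_ofReal, smul_eq_mul, ← Complex.exp_add, neg_mul, sub_eq_add_neg]

end StableCharFun

end

/-- Characteristic function of the positively skewed `α`-stable law:
`∫_ℝ e^{iθz} h_α(z,s) dz = exp(−s|θ|^α e^{−iπα·sgn(θ)/2}) (= e^{−s(−iθ)^α})`. -/
theorem stmt13 (α s θ : ℝ) (hα : α ∈ Set.Ioo (0 : ℝ) 1) (hs : 0 < s) :
    Integrable (fun z : ℝ => Complex.exp (Complex.I * θ * z) * hstable α s z) ∧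
    ∫ z : ℝ, Complex.exp (Complex.I * θ * z) * hstable α s z =
      Complex.exp (-((s * |θ| ^ α : ℝ) : ℂ) *
        Complex.exp (-(Complex.I * ((Real.pi * α * Real.sign θ / 2 : ℝ) : ℂ)))) := by
  have hint := integrable_stableLaplace_neg_I_mul hα hs
  have hfourier :=
    (hasPowerSingularity_stableLaplace_neg_I_mul hα hs.le).integrable_fourier hint hα.1 hα.2
  have hinversion := integral_exp_I_mul_smul_fourier_div_two_pi
    (continuous_stableLaplace_neg_I_mul hα.1) hint hfourier θ
  simp only [hstable_eq_fourier, mul_left_comm _ (((2 * π)⁻¹ : ℝ) : ℂ),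
    ← smul_eq_mul (Complex.exp (Complex.I * θ * _))]
  refine ⟨(integrable_exp_I_mul_smul (hfourier.comp_div two_pi_pos.ne') θ).const_mul _, ?_⟩
  rw [integral_const_mul, hinversion, stableLaplace_neg_I_mul_ofReal, Complex.real_smul,
    ← mul_assoc, ← Complex.ofReal_mul, inv_mul_cancel₀ two_pi_pos.ne', Complex.ofReal_one, one_mul]
end
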